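/- Consider the setting of the linear problem: q_e : 𝕋_L → ℝ smooth and positive, ω₀ > 0, and smooth Q, F, G on 𝕋_L × [0,∞) with smooth b : 𝕋_L → ℝ satisfying ∂_s Q − ω₀ q_e(s) ∂_ψ² Q = F + ∂_ψ² G, Q(s,0) = b(s), Q(s,ψ) → 0 as ψ → ∞. Fix integers k, m ≥ 0 and write Q^{(j)} := ∂_s^j Q, F^{(k)} := ∂_s^k F, G^{(k)} := ∂_s^k G. Then there is a constant C (depending on k, m, L, ω₀, q_e) such that ‖⟨ψ⟩^m ∂_s Q^{(k)}‖²_{L²} ≤ C ( ‖⟨ψ⟩^m F^{(k)}‖²_{L²} + ‖⟨ψ⟩^m ∂_ψ² G^{(k)}‖²_{L²} + ‖b‖²_{H^{k+1}(𝕋_L)} + 𝟙_{m≥1} ‖⟨ψ⟩^{m−1} ∂_ψ Q^{(k)}‖²_{L²} + 𝟙_{k≥1} Σ_{k'=0}^{k−1} ‖⟨ψ⟩^m ∂_ψ² Q^{(k')}‖²_{L²} ), provided all norms appearing are finite. -/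

import Mathlib

open MeasureTheory Set Function Filter

/-- `k`-th partial derivative in the tangential variable `s` of a function on
`𝕋_L × [0,∞)` (represented as a curried function `ℝ → ℝ → ℝ`). -/
noncomputable def dS (k : ℕ) (h : ℝ → ℝ → ℝ) : ℝ → ℝ → ℝ :=
  fun s ψ => iteratedDeriv k (fun s' => h s' ψ) s

/-- `j`-th partial derivative in the normal (von Mises) variable `ψ`. -/
noncomputable def dPsi (j : ℕ) (h : ℝ → ℝ → ℝ) : ℝ → ℝ → ℝ :=
  fun s ψ => iteratedDeriv j (fun ψ' => h s ψ') ψ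

/-- Squared `L²` norm over `𝕋_L × ℝ₊` (fundamental domain `(0,L] × (0,∞)`). -/
noncomputable def L2sq (L : ℝ) (h : ℝ → ℝ → ℝ) : ℝ :=
  ∫ p in Ioc (0:ℝ) L ×ˢ Ioi (0:ℝ), (h p.1 p.2) ^ 2

/-- Square-integrability over `𝕋_L × ℝ₊`. -/
def FiniteL2 (L : ℝ) (h : ℝ → ℝ → ℝ) : Prop :=
  IntegrableOn (fun p : ℝ × ℝ => (h p.1 p.2) ^ 2) (Ioc (0:ℝ) L ×ˢ Ioi (0:ℝ))

/-- The weight `⟨ψ⟩^m h`. -/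
noncomputable def wt (m : ℕ) (h : ℝ → ℝ → ℝ) : ℝ → ℝ → ℝ :=
  fun s ψ => (1 + ψ) ^ m * h s ψ

/-- Squared `X_{k,m}` norm:
`‖h‖²_{X_{k,m}} = Σ_{k'≤k} Σ_{m'≤m} (‖⟨ψ⟩^{m'}∂_s^{k'}h‖² + ‖⟨ψ⟩^{m'}∂_s^{k'+1}h‖²
+ ‖⟨ψ⟩^{m'}∂_ψ∂_s^{k'}h‖² + ‖⟨ψ⟩^{m'}∂_ψ²∂_s^{k'}h‖²)`. -/
noncomputable def XnormSq (L : ℝ) (k m : ℕ) (h : ℝ → ℝ → ℝ) : ℝ :=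
  ∑ k' ∈ Finset.range (k+1), ∑ m' ∈ Finset.range (m+1),
    (L2sq L (wt m' (dS k' h)) + L2sq L (wt m' (dS (k'+1) h))
      + L2sq L (wt m' (dPsi 1 (dS k' h))) + L2sq L (wt m' (dPsi 2 (dS k' h))))

/-- The `X_{k,m}` norm. -/
noncomputable def Xnorm (L : ℝ) (k m : ℕ) (h : ℝ → ℝ → ℝ) : ℝ :=
  Real.sqrt (XnormSq L k m h)

/-- Membership in the space `X_{k,m}`: all the defining integrands are integrable. -/
def XFinite (L : ℝ) (k m : ℕ) (h : ℝ → ℝ → ℝ) : Prop :=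
  ∀ k' ≤ k, ∀ m' ≤ m,
    FiniteL2 L (wt m' (dS k' h)) ∧ FiniteL2 L (wt m' (dS (k'+1) h))
      ∧ FiniteL2 L (wt m' (dPsi 1 (dS k' h))) ∧ FiniteL2 L (wt m' (dPsi 2 (dS k' h)))

/-- Joint smoothness of a curried function of two real variables. -/
def Smooth2 (h : ℝ → ℝ → ℝ) : Prop :=
  ContDiff ℝ (⊤ : ℕ∞) (fun p : ℝ × ℝ => h p.1 p.2)

/-- Periodicity in the first (tangential) variable. -/
def PeriodicS (L : ℝ) (h : ℝ → ℝ → ℝ) : Prop :=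
  ∀ ψ : ℝ, Function.Periodic (fun s => h s ψ) L

/-- Squared `H^n` norm of a function on `𝕋_L`. -/
noncomputable def HnormSq (L : ℝ) (n : ℕ) (b : ℝ → ℝ) : ℝ :=
  ∑ j ∈ Finset.range (n+1), ∫ s in (0:ℝ)..L, (iteratedDeriv j b s) ^ 2

/-!
Subtract the lift `Q^{(k)}(s,0) e^{-ψ}` of the boundary values to get a function `v` vanishing at
`ψ = 0`, and test `P = ∂_s v - ω q ∂_ψ² v` with `⟨ψ⟩^{2m} ∂_s v / q`. Integrating the diffusion term
by parts in `ψ` leaves `⟨ψ⟩^{2m} ∂_s (v_ψ²) / 2`, whose integral over a period vanishes, and a term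
in `m ⟨ψ⟩^{2m-1} v_ψ ∂_s v`, absorbed by Young's inequality. As for the boundary term at infinity,
the flux `Φ(ψ) = ∫ ⟨ψ⟩^{2m} v_ψ ∂_s v ds` has an integrable derivative, hence a limit, and
`Φ(ψ) / ⟨ψ⟩` is integrable while `1 / ⟨ψ⟩` is not, so the limit is zero. For `k ≥ 1`, the Leibniz
rule bounds the commutator of `∂_s^k` with `q ∂_ψ²` by the terms `∂_ψ² Q^{(k')}`, `k' < k`.
-/

section PartialDerivatives

variable {f g h : ℝ → ℝ → ℝ} {L s ψ : ℝ}

theorem Smooth2.continuous (hh : Smooth2 h) : Continuous (uncurry h) :=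
  ContDiff.continuous hh

theorem Smooth2.contDiff_slice_left (hh : Smooth2 h) (ψ : ℝ) :
    ContDiff ℝ (⊤ : ℕ∞) (fun s => h s ψ) :=
  ContDiff.comp (g := uncurry h) hh (contDiff_id.prodMk contDiff_const)

theorem Smooth2.contDiff_slice_right (hh : Smooth2 h) (s : ℝ) : ContDiff ℝ (⊤ : ℕ∞) (h s) :=
  ContDiff.comp (g := uncurry h) hh (contDiff_const.prodMk contDiff_id)

theorem Smooth2.sub (hf : Smooth2 f) (hg : Smooth2 g) : Smooth2 (f - g) :=
  ContDiff.sub hf hg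

theorem Smooth2.mul (hf : Smooth2 f) (hg : Smooth2 g) : Smooth2 (f * g) :=
  ContDiff.mul hf hg

protected theorem Smooth2.wt (hh : Smooth2 h) (m : ℕ) : Smooth2 (wt m h) :=
  ((contDiff_const.add contDiff_snd).pow m).mul hh

theorem dS_zero (h : ℝ → ℝ → ℝ) : dS 0 h = h := by
  ext; simp only [dS, iteratedDeriv_zero]

theorem dS_succ (k : ℕ) (h : ℝ → ℝ → ℝ) : dS (k + 1) h = dS 1 (dS k h) := by
  ext; simp only [dS, iteratedDeriv_succ, iteratedDeriv_zero]

theorem dS_succ' (k : ℕ) (h : ℝ → ℝ → ℝ) : dS (k + 1) h = dS k (dS 1 h) := by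
  ext; simp only [dS, iteratedDeriv_succ', iteratedDeriv_zero]

theorem dPsi_zero (h : ℝ → ℝ → ℝ) : dPsi 0 h = h := by
  ext; simp only [dPsi, iteratedDeriv_zero]

theorem dPsi_succ (j : ℕ) (h : ℝ → ℝ → ℝ) : dPsi (j + 1) h = dPsi 1 (dPsi j h) := by
  ext; simp only [dPsi, iteratedDeriv_succ, iteratedDeriv_zero]

theorem Smooth2.hasDerivAt_dS_one (hh : Smooth2 h) (s ψ : ℝ) :
    HasDerivAt (fun s' => h s' ψ) (dS 1 h s ψ) s := by
  simpa only [dS, iteratedDeriv_one] using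
    ((hh.contDiff_slice_left ψ).differentiable (by simp) s).hasDerivAt

theorem Smooth2.hasDerivAt_dPsi_one (hh : Smooth2 h) (s ψ : ℝ) :
    HasDerivAt (h s) (dPsi 1 h s ψ) ψ := by
  simpa only [dPsi, iteratedDeriv_one] using
    ((hh.contDiff_slice_right s).differentiable (by simp) ψ).hasDerivAt

theorem dS_one_eq_of_hasDerivAt {d : ℝ} (hd : HasDerivAt (fun s' => h s' ψ) d s) :
    dS 1 h s ψ = d := by
  simpa only [dS, iteratedDeriv_one] using hd.deriv

theorem dPsi_one_eq_of_hasDerivAt {d : ℝ} (hd : HasDerivAt (h s) d ψ) : dPsi 1 h s ψ = d := by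
  simpa only [dPsi, iteratedDeriv_one] using hd.deriv

theorem Smooth2.contDiffAt_slice_left (hh : Smooth2 h) (k : ℕ) (s ψ : ℝ) :
    ContDiffAt ℝ k (fun s' => h s' ψ) s :=
  ((hh.contDiff_slice_left ψ).of_le (mod_cast le_top)).contDiffAt

theorem Smooth2.contDiffAt_slice_right (hh : Smooth2 h) (j : ℕ) (s ψ : ℝ) :
    ContDiffAt ℝ j (h s) ψ :=
  ((hh.contDiff_slice_right s).of_le (mod_cast le_top)).contDiffAt

theorem Smooth2.dS_add (hf : Smooth2 f) (hg : Smooth2 g) (k : ℕ) :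
    dS k (f + g) = dS k f + dS k g := by
  ext s ψ
  exact iteratedDeriv_fun_add (hf.contDiffAt_slice_left k s ψ) (hg.contDiffAt_slice_left k s ψ)

theorem Smooth2.dS_sub (hf : Smooth2 f) (hg : Smooth2 g) (k : ℕ) :
    dS k (f - g) = dS k f - dS k g := by
  ext s ψ
  exact iteratedDeriv_fun_sub (hf.contDiffAt_slice_left k s ψ) (hg.contDiffAt_slice_left k s ψ)

theorem Smooth2.dPsi_sub (hf : Smooth2 f) (hg : Smooth2 g) (j : ℕ) :
    dPsi j (f - g) = dPsi j f - dPsi j g := by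
  ext s ψ
  exact iteratedDeriv_fun_sub (hf.contDiffAt_slice_right j s ψ) (hg.contDiffAt_slice_right j s ψ)

theorem Smooth2.contDiff_uncurry (hh : Smooth2 h) : ContDiff ℝ (⊤ : ℕ∞) (uncurry h) := hh

theorem Smooth2.hasFDerivAt (hh : Smooth2 h) (p : ℝ × ℝ) :
    HasFDerivAt (uncurry h) (fderiv ℝ (uncurry h) p) p :=
  (hh.contDiff_uncurry.differentiable (by simp) p).hasFDerivAt

theorem Smooth2.uncurry_dS_one (hh : Smooth2 h) :
    uncurry (dS 1 h) = fun p => fderiv ℝ (uncurry h) p (1, 0) := by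
  ext ⟨s, ψ⟩
  refine dS_one_eq_of_hasDerivAt ?_
  exact (hh.hasFDerivAt (s, ψ)).comp_hasDerivAt (f := fun s' => (s', ψ)) s
    ((hasDerivAt_id s).prodMk (hasDerivAt_const s ψ))

theorem Smooth2.uncurry_dPsi_one (hh : Smooth2 h) :
    uncurry (dPsi 1 h) = fun p => fderiv ℝ (uncurry h) p (0, 1) := by
  ext ⟨s, ψ⟩
  refine dPsi_one_eq_of_hasDerivAt ?_
  exact (hh.hasFDerivAt (s, ψ)).comp_hasDerivAt (f := fun ψ' => (s, ψ')) ψ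
    ((hasDerivAt_const ψ s).prodMk (hasDerivAt_id ψ))

theorem Smooth2.contDiff_fderiv (hh : Smooth2 h) :
    ContDiff ℝ (⊤ : ℕ∞) (fderiv ℝ (uncurry h)) :=
  hh.contDiff_uncurry.fderiv_right (m := (⊤ : ℕ∞)) (by simp)

theorem Smooth2.fderiv_fderiv_apply (hh : Smooth2 h) (p v w : ℝ × ℝ) :
    fderiv ℝ (fun p => fderiv ℝ (uncurry h) p v) p w = fderiv ℝ (fderiv ℝ (uncurry h)) p w v := by
  rw [fderiv_clm_apply (hh.contDiff_fderiv.differentiable (by simp) p) (by fun_prop)]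
  simp

theorem Smooth2.dS_one (hh : Smooth2 h) : Smooth2 (dS 1 h) := by
  change ContDiff ℝ _ (uncurry (dS 1 h))
  rw [hh.uncurry_dS_one]
  exact hh.contDiff_fderiv.clm_apply contDiff_const

theorem Smooth2.dPsi_one (hh : Smooth2 h) : Smooth2 (dPsi 1 h) := by
  change ContDiff ℝ _ (uncurry (dPsi 1 h))
  rw [hh.uncurry_dPsi_one]
  exact hh.contDiff_fderiv.clm_apply contDiff_const

protected theorem Smooth2.dS (hh : Smooth2 h) (k : ℕ) : Smooth2 (dS k h) := by
  induction k with
  | zero => rwa [dS_zero]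
  | succ k ih => rw [dS_succ]; exact ih.dS_one

protected theorem Smooth2.dPsi (hh : Smooth2 h) (j : ℕ) : Smooth2 (dPsi j h) := by
  induction j with
  | zero => rwa [dPsi_zero]
  | succ j ih => rw [dPsi_succ]; exact ih.dPsi_one

theorem Smooth2.dS_one_dPsi_one (hh : Smooth2 h) : dS 1 (dPsi 1 h) = dPsi 1 (dS 1 h) := by
  ext s ψ
  have symm : IsSymmSndFDerivAt ℝ (uncurry h) (s, ψ) :=
    hh.contDiff_uncurry.contDiffAt.isSymmSndFDerivAt (by
      simp only [minSmoothness_of_isRCLikeNormedField]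
      exact WithTop.coe_le_coe.2 le_top)
  calc dS 1 (dPsi 1 h) s ψ
      = fderiv ℝ (uncurry (dPsi 1 h)) (s, ψ) (1, 0) := congrFun hh.dPsi_one.uncurry_dS_one (s, ψ)
    _ = fderiv ℝ (uncurry (dS 1 h)) (s, ψ) (0, 1) := by
        rw [hh.uncurry_dPsi_one, hh.uncurry_dS_one, hh.fderiv_fderiv_apply, symm.eq,
          hh.fderiv_fderiv_apply]
    _ = dPsi 1 (dS 1 h) s ψ := (congrFun hh.dS_one.uncurry_dPsi_one (s, ψ)).symm

theorem Smooth2.dS_dPsi_one (hh : Smooth2 h) (k : ℕ) : dS k (dPsi 1 h) = dPsi 1 (dS k h) := by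
  induction k with
  | zero => simp only [dS_zero]
  | succ k ih => rw [dS_succ, ih, (hh.dS k).dS_one_dPsi_one, ← dS_succ]

theorem Smooth2.dS_dPsi (hh : Smooth2 h) (k j : ℕ) : dS k (dPsi j h) = dPsi j (dS k h) := by
  induction j with
  | zero => simp only [dPsi_zero]
  | succ j ih => rw [dPsi_succ, (hh.dPsi j).dS_dPsi_one, ih, ← dPsi_succ]

theorem PeriodicS.sub (hf : PeriodicS L f) (hg : PeriodicS L g) : PeriodicS L (f - g) :=
  fun ψ => (hf ψ).sub (hg ψ)

protected theorem PeriodicS.dS (hh : PeriodicS L h) (k : ℕ) : PeriodicS L (dS k h) := by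
  intro ψ s
  have := congrFun (iteratedDeriv_comp_add_const k (fun s' => h s' ψ) L) s
  rw [funext (hh ψ)] at this
  exact this.symm

protected theorem PeriodicS.dPsi (hh : PeriodicS L h) (j : ℕ) : PeriodicS L (dPsi j h) := by
  intro ψ s
  have : h (s + L) = h s := funext fun ψ' => hh ψ' s
  exact congrArg (fun φ => iteratedDeriv j φ ψ) this

end PartialDerivatives

section SquareIntegrability

variable {f g h : ℝ → ℝ → ℝ} {c : ℝ → ℝ} {L : ℝ}

/-- The fundamental domain `(0,L] × (0,∞)` of the half-cylinder `𝕋_L × (0,∞)`. -/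
def strip (L : ℝ) : Set (ℝ × ℝ) := Ioc 0 L ×ˢ Ioi 0

/-- Membership in `L²(𝕋_L × (0,∞))`. Unlike `FiniteL2` it includes measurability of the function
itself, which makes it stable under sums. -/
def MemL2 (L : ℝ) (h : ℝ → ℝ → ℝ) : Prop :=
  MemLp (uncurry h) 2 (volume.restrict (strip L))

theorem measurableSet_strip (L : ℝ) : MeasurableSet (strip L) :=
  measurableSet_Ioc.prod measurableSet_Ioi

theorem FiniteL2.memL2 (hh : FiniteL2 L h) (hc : Continuous (uncurry h)) : MemL2 L h :=
  (memLp_two_iff_integrable_sq hc.aestronglyMeasurable).2 hh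

theorem MemL2.integrableOn_mul (hf : MemL2 L f) (hg : MemL2 L g) :
    IntegrableOn (fun p => f p.1 p.2 * g p.1 p.2) (strip L) :=
  MemLp.integrable_mul hf hg

theorem MemL2.integrableOn_sq (hf : MemL2 L f) :
    IntegrableOn (fun p => f p.1 p.2 ^ 2) (strip L) :=
  MemLp.integrable_sq hf

theorem MemL2.add (hf : MemL2 L f) (hg : MemL2 L g) : MemL2 L (f + g) :=
  MemLp.add hf hg

theorem MemL2.sub (hf : MemL2 L f) (hg : MemL2 L g) : MemL2 L (f - g) :=
  MemLp.sub hf hg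

theorem MemL2.neg (hf : MemL2 L f) : MemL2 L (-f) :=
  MemLp.neg hf

theorem MemL2.mul_left (hf : MemL2 L f) (hc : Continuous c) :
    MemL2 L (fun s ψ => c s * f s ψ) := by
  obtain ⟨M, hM⟩ := isCompact_Icc.exists_bound_of_continuousOn (s := Icc 0 L) hc.continuousOn
  refine MemLp.of_le_mul (c := M) hf
    ((hc.comp continuous_fst).aestronglyMeasurable.mul hf.aestronglyMeasurable) ?_
  filter_upwards [ae_restrict_mem (measurableSet_strip L)] with p hp
  rw [uncurry, uncurry, norm_mul]
  exact mul_le_mul_of_nonneg_right (hM _ (Ioc_subset_Icc_self hp.1)) (norm_nonneg _)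

theorem L2sq_nonneg (L : ℝ) (h : ℝ → ℝ → ℝ) : 0 ≤ L2sq L h :=
  integral_nonneg fun _ => sq_nonneg _

theorem L2sq_congr (hfg : ∀ s, ∀ ψ > 0, f s ψ = g s ψ) : L2sq L f = L2sq L g :=
  setIntegral_congr_fun (measurableSet_strip L) fun p hp => by rw [hfg p.1 p.2 hp.2]

theorem MemL2.L2sq_add_le (hf : MemL2 L f) (hg : MemL2 L g) :
    L2sq L (f + g) ≤ 2 * (L2sq L f + L2sq L g) := by
  calc L2sq L (f + g)
      ≤ ∫ p in strip L, 2 * (f p.1 p.2 ^ 2 + g p.1 p.2 ^ 2) :=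
        integral_mono (hf.add hg).integrableOn_sq
          ((hf.integrableOn_sq.add hg.integrableOn_sq).const_mul 2) fun _ => add_sq_le
    _ = 2 * (L2sq L f + L2sq L g) := by
        rw [integral_const_mul, integral_add hf.integrableOn_sq hg.integrableOn_sq]
        rfl

theorem L2sq_neg (L : ℝ) (f : ℝ → ℝ → ℝ) : L2sq L (-f) = L2sq L f := by
  simp only [L2sq, Pi.neg_apply, neg_sq]

theorem MemL2.L2sq_sub_le (hf : MemL2 L f) (hg : MemL2 L g) :
    L2sq L (f - g) ≤ 2 * (L2sq L f + L2sq L g) := by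
  simpa only [sub_eq_add_neg, L2sq_neg] using hf.L2sq_add_le hg.neg

theorem MemL2.L2sq_mul_left_le (hf : MemL2 L f) (hc : Continuous c) {M : ℝ}
    (hM : ∀ s ∈ Ioc 0 L, |c s| ≤ M) :
    L2sq L (fun s ψ => c s * f s ψ) ≤ M ^ 2 * L2sq L f := by
  calc L2sq L (fun s ψ => c s * f s ψ)
      ≤ ∫ p in strip L, M ^ 2 * f p.1 p.2 ^ 2 := by
        refine setIntegral_mono_on (hf.mul_left hc).integrableOn_sq
          (hf.integrableOn_sq.const_mul _) (measurableSet_strip L) fun p hp => ?_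
        rw [mul_pow]
        exact mul_le_mul_of_nonneg_right (sq_le_sq' (neg_le_of_abs_le (hM _ hp.1))
          (le_of_abs_le (hM _ hp.1))) (sq_nonneg _)
    _ = M ^ 2 * L2sq L f := integral_const_mul _ _

variable {ι : Type*} {t : Finset ι} {φ : ι → ℝ → ℝ → ℝ}

theorem MemL2.sum (hφ : ∀ i ∈ t, MemL2 L (φ i)) : MemL2 L (∑ i ∈ t, φ i) := by
  classical
  induction t using Finset.induction_on with
  | empty => exact (MemLp.zero : MemLp (0 : ℝ × ℝ → ℝ) 2 _)
  | insert i t hi ih =>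
    rw [Finset.sum_insert hi]
    exact (hφ i (t.mem_insert_self i)).add (ih fun j hj => hφ j (Finset.mem_insert_of_mem hj))

theorem L2sq_sum_le (hφ : ∀ i ∈ t, MemL2 L (φ i)) :
    L2sq L (∑ i ∈ t, φ i) ≤ t.card * ∑ i ∈ t, L2sq L (φ i) := by
  have sq_int : ∀ i ∈ t, IntegrableOn (fun p => φ i p.1 p.2 ^ 2) (strip L) :=
    fun i hi => (hφ i hi).integrableOn_sq
  calc L2sq L (∑ i ∈ t, φ i)
      ≤ ∫ p in strip L, t.card * ∑ i ∈ t, φ i p.1 p.2 ^ 2 := by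
        refine integral_mono (MemL2.sum hφ).integrableOn_sq
          ((integrable_finsetSum t sq_int).const_mul _) fun p => ?_
        simpa only [Finset.sum_apply] using sq_sum_le_card_mul_sum_sq
    _ = t.card * ∑ i ∈ t, L2sq L (φ i) := by
        rw [integral_const_mul, integral_finsetSum t sq_int]
        rfl

theorem wt_add (m : ℕ) (f g : ℝ → ℝ → ℝ) : wt m (f + g) = wt m f + wt m g := by
  ext s ψ
  exact mul_add _ _ _

theorem wt_sub (m : ℕ) (f g : ℝ → ℝ → ℝ) : wt m (f - g) = wt m f - wt m g := by
  ext s ψ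
  exact mul_sub _ _ _

theorem wt_sum (m : ℕ) (t : Finset ι) (φ : ι → ℝ → ℝ → ℝ) :
    wt m (∑ i ∈ t, φ i) = ∑ i ∈ t, wt m (φ i) := by
  ext s ψ
  simp only [wt, Finset.sum_apply, Finset.mul_sum]

theorem wt_mul_left (m : ℕ) (c : ℝ → ℝ) (f : ℝ → ℝ → ℝ) :
    wt m (fun s ψ => c s * f s ψ) = fun s ψ => c s * wt m f s ψ := by
  ext s ψ
  exact mul_left_comm _ _ _

end SquareIntegrability

section EnergyIdentity

variable {f g h : ℝ → ℝ → ℝ} {L : ℝ} {m : ℕ}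

theorem eq_zero_of_tendsto_of_integrableOn_div {φ : ℝ → ℝ} {ℓ : ℝ}
    (hφ : Tendsto φ atTop (nhds ℓ)) (hint : IntegrableOn (fun x => φ x / (1 + x)) (Ioi 0)) :
    ℓ = 0 := by
  by_contra hℓ
  have inv_isBigO : (fun x : ℝ => x⁻¹) =O[atTop] fun x => (1 + x)⁻¹ := by
    refine Asymptotics.IsBigO.of_bound 2 ?_
    filter_upwards [eventually_ge_atTop 1] with x hx
    rw [Real.norm_of_nonneg (by positivity), Real.norm_of_nonneg (by positivity),
      ← div_eq_mul_inv, inv_eq_one_div, div_le_div_iff₀ (by positivity) (by positivity)]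
    linarith
  have one_isBigO : (fun _ => (1 : ℝ)) =O[atTop] φ :=
    (Asymptotics.isBigO_const_left_iff_pos_le_norm one_ne_zero).2
      ⟨‖ℓ‖ / 2, by positivity, (hφ.norm.eventually_const_lt (half_lt_self (norm_pos_iff.2 hℓ))).mono
        fun _ => le_of_lt⟩
  have inv_integrable : IntegrableAtFilter (fun x : ℝ => x⁻¹) atTop :=
    Asymptotics.IsBigO.integrableAtFilter
      (by simpa only [one_mul, div_eq_mul_inv] using one_isBigO.mul inv_isBigO)
      (measurable_inv.stronglyMeasurable.stronglyMeasurableAtFilter)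
      ⟨Ioi 0, Ioi_mem_atTop 0, hint⟩
  exact lt_irrefl _ (integrableAtFilter_rpow_atTop_iff.1
    (by simpa only [Real.rpow_neg_one] using inv_integrable))

theorem integral_Ioi_deriv_eq_neg_of_integrableOn_div {φ φ' : ℝ → ℝ}
    (hφ : ∀ x, HasDerivAt φ (φ' x) x) (hφ' : IntegrableOn φ' (Ioi 0))
    (hint : IntegrableOn (fun x => φ x / (1 + x)) (Ioi 0)) :
    ∫ x in Ioi 0, φ' x = -φ 0 := by
  have lim := tendsto_limUnder_of_hasDerivAt_of_integrableOn_Ioi (fun x _ => hφ x) hφ'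
  rw [integral_Ioi_of_hasDerivAt_of_tendsto' (fun x _ => hφ x) hφ' lim,
    eq_zero_of_tendsto_of_integrableOn_div lim hint, zero_sub]

theorem integrableOn_integral_of_integrableOn_strip (hL : 0 ≤ L)
    (hh : IntegrableOn (fun p => h p.1 p.2) (strip L)) :
    IntegrableOn (fun ψ => ∫ s in 0..L, h s ψ) (Ioi 0) := by
  simp only [intervalIntegral.integral_of_le hL]
  rw [IntegrableOn, strip, Measure.volume_eq_prod, ← Measure.prod_restrict] at hh
  exact hh.integral_prod_right

theorem setIntegral_strip (hL : 0 ≤ L) (hh : IntegrableOn (fun p => h p.1 p.2) (strip L)) :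
    ∫ p in strip L, h p.1 p.2 = ∫ ψ in Ioi 0, ∫ s in 0..L, h s ψ := by
  simp only [intervalIntegral.integral_of_le hL]
  rw [IntegrableOn, strip, Measure.volume_eq_prod, ← Measure.prod_restrict] at hh
  rw [strip, Measure.volume_eq_prod, ← Measure.prod_restrict]
  exact integral_prod_symm _ hh

theorem Smooth2.intervalIntegrable (hh : Smooth2 h) (ψ a b : ℝ) :
    IntervalIntegrable (fun s => h s ψ) volume a b :=
  (hh.contDiff_slice_left ψ).continuous.intervalIntegrable a b

theorem Smooth2.hasDerivAt_integral (hh : Smooth2 h) (a b ψ : ℝ) :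
    HasDerivAt (fun ψ => ∫ s in a..b, h s ψ) (∫ s in a..b, dPsi 1 h s ψ) ψ := by
  obtain ⟨M, hM⟩ := (isCompact_uIcc.prod isCompact_Icc).exists_bound_of_continuousOn
    (s := uIcc a b ×ˢ Icc (ψ - 1) (ψ + 1)) hh.dPsi_one.continuous.continuousOn
  refine (intervalIntegral.hasDerivAt_integral_of_dominated_loc_of_deriv_le
    (bound := fun _ => M) (Icc_mem_nhds (sub_one_lt ψ) (lt_add_one ψ))
    (.of_forall fun ψ' => (hh.contDiff_slice_left ψ').continuous.aestronglyMeasurable)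
    (hh.intervalIntegrable ψ a b)
    (hh.dPsi_one.contDiff_slice_left ψ).continuous.aestronglyMeasurable
    (.of_forall fun s hs ψ' hψ' => hM (s, ψ') ⟨uIoc_subset_uIcc hs, hψ'⟩)
    intervalIntegrable_const
    (.of_forall fun s _ ψ' _ => hh.hasDerivAt_dPsi_one s ψ')).2

theorem PeriodicS.integral_mul_dS_one_self (hper : PeriodicS L h) (hh : Smooth2 h) (ψ : ℝ) :
    ∫ s in 0..L, h s ψ * dS 1 h s ψ = 0 := by
  have deriv_sq (s : ℝ) : HasDerivAt (fun s => h s ψ ^ 2 / 2) (h s ψ * dS 1 h s ψ) s :=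
    (((hh.hasDerivAt_dS_one s ψ).pow 2).div_const 2).congr_deriv (by ring)
  have endpoints : h L ψ = h 0 ψ := by simpa only [zero_add] using hper ψ 0
  rw [intervalIntegral.integral_eq_sub_of_hasDerivAt (fun s _ => deriv_sq s)
    ((hh.mul hh.dS_one).intervalIntegrable ψ 0 L),
    endpoints, sub_self]

theorem dS_wt (k m : ℕ) (h : ℝ → ℝ → ℝ) : dS k (wt m h) = wt m (dS k h) := by
  ext s ψ
  exact iteratedDeriv_const_mul_field _ _

theorem Smooth2.dPsi_one_wt (hh : Smooth2 h) (m : ℕ) (s ψ : ℝ) :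
    dPsi 1 (wt m h) s ψ = wt m (dPsi 1 h) s ψ + m * wt (m - 1) h s ψ := by
  refine dPsi_one_eq_of_hasDerivAt <| ((((hasDerivAt_id' ψ).const_add 1).fun_pow m).fun_mul
    (hh.hasDerivAt_dPsi_one s ψ)).congr_deriv ?_
  simp only [wt]
  ring

theorem Smooth2.dPsi_one_mul (hf : Smooth2 f) (hg : Smooth2 g) (s ψ : ℝ) :
    dPsi 1 (f * g) s ψ = dPsi 1 f s ψ * g s ψ + f s ψ * dPsi 1 g s ψ :=
  dPsi_one_eq_of_hasDerivAt ((hf.hasDerivAt_dPsi_one s ψ).mul (hg.hasDerivAt_dPsi_one s ψ))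

protected theorem PeriodicS.wt (hh : PeriodicS L h) (m : ℕ) : PeriodicS L (wt m h) :=
  fun ψ s => congrArg ((1 + ψ) ^ m * ·) (hh ψ s)

theorem MemL2.wt_div_one_add (hh : MemL2 L (wt (m - 1) h)) (hc : Continuous (uncurry h)) :
    MemL2 L (fun s ψ => wt m h s ψ / (1 + ψ)) := by
  have meas : Measurable fun p : ℝ × ℝ => (1 + p.2) ^ m * uncurry h p / (1 + p.2) := by
    have := hc.measurable
    fun_prop
  refine MemLp.of_le hh meas.aestronglyMeasurable ?_
  filter_upwards [ae_restrict_mem (measurableSet_strip L)] with ⟨s, ψ⟩ hp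
  have hψ : 0 < ψ := hp.2
  have pow_div_le : (1 + ψ) ^ m / (1 + ψ) ≤ (1 + ψ) ^ (m - 1) := by
    rw [div_le_iff₀ (by positivity), ← pow_succ]
    exact pow_le_pow_right₀ (by linarith) le_tsub_add
  simp only [uncurry, wt, norm_mul, norm_div, norm_pow]
  rw [Real.norm_of_nonneg (by positivity : 0 ≤ 1 + ψ), mul_div_right_comm]
  gcongr

/-- The flux `⟨ψ⟩^{2m} ∂_ψ v ∂_s v` through the levels `ψ = const`, i.e. the boundary term of the
integration by parts in `ψ`. -/
noncomputable def weightedFlux (m : ℕ) (v : ℝ → ℝ → ℝ) : ℝ → ℝ → ℝ :=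
  wt m (dPsi 1 v) * wt m (dS 1 v)

/-- The multiplier `∂_ψ(⟨ψ⟩^{2m} v_ψ) / ⟨ψ⟩^m` produced by moving the weight of the test function
`⟨ψ⟩^{2m} ∂_s v` onto `∂_ψ² v`. -/
noncomputable def weightedDiffusion (m : ℕ) (v : ℝ → ℝ → ℝ) : ℝ → ℝ → ℝ :=
  fun s ψ => wt m (dPsi 2 v) s ψ + 2 * m * wt (m - 1) (dPsi 1 v) s ψ

theorem Smooth2.dPsi_one_weightedFlux (hh : Smooth2 h) (m : ℕ) (s ψ : ℝ) :
    dPsi 1 (weightedFlux m h) s ψ =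
      weightedDiffusion m h s ψ * wt m (dS 1 h) s ψ
        + wt m (dPsi 1 h) s ψ * dS 1 (wt m (dPsi 1 h)) s ψ := by
  rw [weightedFlux, (hh.dPsi_one.wt m).dPsi_one_mul (hh.dS_one.wt m), hh.dPsi_one.dPsi_one_wt,
    hh.dS_one.dPsi_one_wt, dS_wt, hh.dS_one_dPsi_one, weightedDiffusion, ← dPsi_succ]
  simp only [wt]
  ring

theorem memL2_weightedDiffusion (hψ : MemL2 L (wt (m - 1) (dPsi 1 h)))
    (hψψ : MemL2 L (wt m (dPsi 2 h))) : MemL2 L (weightedDiffusion m h) :=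
  hψψ.add (hψ.mul_left continuous_const)

theorem Smooth2.hasDerivAt_integral_weightedFlux (hh : Smooth2 h) (hper : PeriodicS L h)
    (m : ℕ) (ψ : ℝ) :
    HasDerivAt (fun ψ => ∫ s in 0..L, weightedFlux m h s ψ)
      (∫ s in 0..L, weightedDiffusion m h s ψ * wt m (dS 1 h) s ψ) ψ := by
  have smooth_ψ := hh.dPsi_one.wt m
  have smooth_flux : Smooth2 (weightedFlux m h) := smooth_ψ.mul (hh.dS_one.wt m)
  refine (smooth_flux.hasDerivAt_integral 0 L ψ).congr_deriv ?_
  calc ∫ s in 0..L, dPsi 1 (weightedFlux m h) s ψ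
      = (∫ s in 0..L, dPsi 1 (weightedFlux m h) s ψ)
          - ∫ s in 0..L, wt m (dPsi 1 h) s ψ * dS 1 (wt m (dPsi 1 h)) s ψ := by
        rw [((hper.dPsi 1).wt m).integral_mul_dS_one_self smooth_ψ, sub_zero]
    _ = ∫ s in 0..L, weightedDiffusion m h s ψ * wt m (dS 1 h) s ψ := by
        rw [← intervalIntegral.integral_sub
          (smooth_flux.dPsi_one.intervalIntegrable ψ 0 L)
          (by exact (smooth_ψ.mul smooth_ψ.dS_one).intervalIntegrable ψ 0 L)]
        simp only [hh.dPsi_one_weightedFlux, add_sub_cancel_right]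

theorem integral_weightedDiffusion_mul_dS_eq_zero (hL : 0 ≤ L) (hh : Smooth2 h)
    (hper : PeriodicS L h) (htrace : ∀ s, h s 0 = 0) (hs : MemL2 L (wt m (dS 1 h)))
    (hψ : MemL2 L (wt (m - 1) (dPsi 1 h))) (hψψ : MemL2 L (wt m (dPsi 2 h))) :
    ∫ p in strip L, weightedDiffusion m h p.1 p.2 * wt m (dS 1 h) p.1 p.2 = 0 := by
  have integrable := (memL2_weightedDiffusion hψ hψψ).integrableOn_mul hs
  have integrable_flux_div : IntegrableOn (fun ψ =>
      (∫ s in 0..L, weightedFlux m h s ψ) / (1 + ψ)) (Ioi 0) := by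
    simpa only [weightedFlux, Pi.mul_apply, div_mul_eq_mul_div,
      intervalIntegral.integral_div] using
      integrableOn_integral_of_integrableOn_strip (h := fun s ψ =>
        wt m (dPsi 1 h) s ψ / (1 + ψ) * wt m (dS 1 h) s ψ) hL
        ((hψ.wt_div_one_add hh.dPsi_one.continuous).integrableOn_mul hs)
  have trace_dS (s : ℝ) : dS 1 h s 0 = 0 :=
    dS_one_eq_of_hasDerivAt (by simpa only [htrace] using hasDerivAt_const s (0 : ℝ))
  rw [setIntegral_strip (h := fun s ψ => weightedDiffusion m h s ψ * wt m (dS 1 h) s ψ) hL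
      integrable,
    integral_Ioi_deriv_eq_neg_of_integrableOn_div
      (hh.hasDerivAt_integral_weightedFlux hper m)
      (integrableOn_integral_of_integrableOn_strip (h := fun s ψ =>
        weightedDiffusion m h s ψ * wt m (dS 1 h) s ψ) hL integrable) integrable_flux_div]
  simp [weightedFlux, wt, trace_dS]

end EnergyIdentity

section EnergyEstimate

variable {h : ℝ → ℝ → ℝ} {q : ℝ → ℝ} {L ω : ℝ} {m : ℕ}

/-- The linear Prandtl operator `∂_s - ω q(s) ∂_ψ²` in von Mises variables. -/
noncomputable def prandtlOp (ω : ℝ) (q : ℝ → ℝ) (h : ℝ → ℝ → ℝ) : ℝ → ℝ → ℝ :=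
  fun s ψ => dS 1 h s ψ - ω * q s * dPsi 2 h s ψ

theorem wt_prandtlOp (m : ℕ) (ω : ℝ) (q : ℝ → ℝ) (h : ℝ → ℝ → ℝ) (s ψ : ℝ) :
    wt m (prandtlOp ω q h) s ψ = wt m (dS 1 h) s ψ - ω * q s * wt m (dPsi 2 h) s ψ := by
  simp only [wt, prandtlOp]
  ring

theorem memL2_wt_prandtlOp (hq : Continuous q) (hs : MemL2 L (wt m (dS 1 h)))
    (hψψ : MemL2 L (wt m (dPsi 2 h))) : MemL2 L (wt m (prandtlOp ω q h)) := by
  have : wt m (prandtlOp ω q h)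
      = wt m (dS 1 h) + fun s ψ => -(ω * q s) * wt m (dPsi 2 h) s ψ := by
    ext s ψ
    simp only [wt_prandtlOp, Pi.add_apply]
    ring
  rw [this]
  exact hs.add (hψψ.mul_left (by fun_prop))

theorem young_prandtl {q q₀ q₁ : ℝ} (hq₀ : 0 < q₀) (hq : q ∈ Icc q₀ q₁) (a d e μ ω : ℝ) :
    a ^ 2 / (2 * q₁) - (a - ω * q * e) ^ 2 / q₀ - (μ * ω) ^ 2 * q₁ * d ^ 2
      ≤ ω * ((e + μ * d) * a) := by
  obtain ⟨hq₀q, hqq₁⟩ := hq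
  have hq_pos : 0 < q := hq₀.trans_le hq₀q
  have squares : ω * ((e + μ * d) * a)
      - (a ^ 2 / (2 * q) - (a - ω * q * e) ^ 2 / q - (μ * ω) ^ 2 * q * d ^ 2)
        = ((a / 2 - (a - ω * q * e)) ^ 2 + (a / 2 + μ * ω * q * d) ^ 2) / q := by
    field_simp
    ring
  calc a ^ 2 / (2 * q₁) - (a - ω * q * e) ^ 2 / q₀ - (μ * ω) ^ 2 * q₁ * d ^ 2
      ≤ a ^ 2 / (2 * q) - (a - ω * q * e) ^ 2 / q - (μ * ω) ^ 2 * q * d ^ 2 := by gcongr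
    _ ≤ ω * ((e + μ * d) * a) := sub_nonneg.1 (squares ▸ by positivity)

theorem L2sq_wt_dS_one_le_of_trace_eq_zero (hL : 0 ≤ L) (hq : Continuous q) {q₀ q₁ : ℝ}
    (hq₀ : 0 < q₀) (hq₁ : 0 < q₁) (hbounds : ∀ s ∈ Ioc 0 L, q s ∈ Icc q₀ q₁) (hh : Smooth2 h)
    (hper : PeriodicS L h) (htrace : ∀ s, h s 0 = 0) (hs : MemL2 L (wt m (dS 1 h)))
    (hψ : MemL2 L (wt (m - 1) (dPsi 1 h))) (hψψ : MemL2 L (wt m (dPsi 2 h))) :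
    L2sq L (wt m (dS 1 h)) ≤ 2 * q₁ * (L2sq L (wt m (prandtlOp ω q h)) / q₀
      + (2 * m * ω) ^ 2 * q₁ * L2sq L (wt (m - 1) (dPsi 1 h))) := by
  have hP := memL2_wt_prandtlOp (ω := ω) hq hs hψψ
  have int_s := hs.integrableOn_sq.div_const (2 * q₁)
  have int_P := hP.integrableOn_sq.div_const q₀
  have int_ψ := hψ.integrableOn_sq.const_mul ((2 * m * ω) ^ 2 * q₁)
  have integrated : L2sq L (wt m (dS 1 h)) / (2 * q₁) - L2sq L (wt m (prandtlOp ω q h)) / q₀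
      - (2 * m * ω) ^ 2 * q₁ * L2sq L (wt (m - 1) (dPsi 1 h)) ≤ 0 := by
    calc L2sq L (wt m (dS 1 h)) / (2 * q₁) - L2sq L (wt m (prandtlOp ω q h)) / q₀
          - (2 * m * ω) ^ 2 * q₁ * L2sq L (wt (m - 1) (dPsi 1 h))
        = ∫ p in strip L, (wt m (dS 1 h) p.1 p.2 ^ 2 / (2 * q₁)
            - wt m (prandtlOp ω q h) p.1 p.2 ^ 2 / q₀
            - (2 * m * ω) ^ 2 * q₁ * wt (m - 1) (dPsi 1 h) p.1 p.2 ^ 2) := by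
          rw [integral_sub (by exact int_s.sub int_P) int_ψ, integral_sub int_s int_P,
            integral_div, integral_div, integral_const_mul]
          rfl
      _ ≤ ∫ p in strip L, ω * (weightedDiffusion m h p.1 p.2 * wt m (dS 1 h) p.1 p.2) := by
          refine setIntegral_mono_on ((int_s.sub int_P).sub int_ψ)
            (((memL2_weightedDiffusion hψ hψψ).integrableOn_mul hs).const_mul ω)
            (measurableSet_strip L) fun p hp => ?_
          rw [wt_prandtlOp]
          exact young_prandtl hq₀ (hbounds _ hp.1) _ _ _ _ _
      _ = 0 := by
          rw [integral_const_mul,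
            integral_weightedDiffusion_mul_dS_eq_zero hL hh hper htrace hs hψ hψψ, mul_zero]
  rw [sub_sub, sub_nonpos, div_le_iff₀' (by positivity)] at integrated
  exact integrated

end EnergyEstimate

section BoundaryLift

variable {f g h : ℝ → ℝ → ℝ} {q : ℝ → ℝ} {L : ℝ} {m : ℕ}

/-- The lift `h(s,0) e^{-ψ}` of the boundary values of `h` into the half-cylinder, subtracted from
`h` to make its trace at `ψ = 0` vanish. -/
noncomputable def traceLift (h : ℝ → ℝ → ℝ) : ℝ → ℝ → ℝ :=
  fun s ψ => h s 0 * Real.exp (-ψ)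

/-- The squared `L²(0,∞)` norm of `⟨ψ⟩^m e^{-ψ}`. -/
noncomputable def expWeightSq (m : ℕ) : ℝ :=
  ∫ ψ in Ioi (0 : ℝ), ((1 + ψ) ^ m * Real.exp (-ψ)) ^ 2

theorem expWeightSq_nonneg (m : ℕ) : 0 ≤ expWeightSq m :=
  integral_nonneg fun _ => sq_nonneg _

theorem integrableOn_expWeight_sq (m : ℕ) :
    IntegrableOn (fun ψ : ℝ => ((1 + ψ) ^ m * Real.exp (-ψ)) ^ 2) (Ioi 0) := by
  refine ((exp_neg_integrableOn_Ioi 0 one_pos).const_mul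
    ((2 * m).factorial * Real.exp 1)).mono' (by fun_prop) ?_
  filter_upwards [ae_restrict_mem measurableSet_Ioi] with ψ hψ
  have pow_le : (1 + ψ) ^ (2 * m) ≤ (2 * m).factorial * Real.exp (1 + ψ) := by
    rw [← div_le_iff₀' (by positivity)]
    exact Real.pow_div_factorial_le_exp _ (by linarith [mem_Ioi.1 hψ]) _
  calc ‖((1 + ψ) ^ m * Real.exp (-ψ)) ^ 2‖
      = (1 + ψ) ^ (2 * m) * (Real.exp (-ψ) * Real.exp (-ψ)) := by
        rw [Real.norm_of_nonneg (sq_nonneg _)]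
        ring
    _ ≤ (2 * m).factorial * Real.exp (1 + ψ) * (Real.exp (-ψ) * Real.exp (-ψ)) := by gcongr
    _ = (2 * m).factorial * Real.exp 1 * Real.exp (-1 * ψ) := by
        simp only [mul_assoc, ← Real.exp_add]
        ring_nf

protected theorem Smooth2.traceLift (hh : Smooth2 h) : Smooth2 (traceLift h) :=
  ((hh.contDiff_slice_left 0).comp contDiff_fst).mul (Real.contDiff_exp.comp contDiff_snd.neg)

protected theorem PeriodicS.traceLift (hh : PeriodicS L h) : PeriodicS L (traceLift h) :=
  fun ψ s => congrArg (· * Real.exp (-ψ)) (hh 0 s)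

theorem traceLift_zero_right (h : ℝ → ℝ → ℝ) (s : ℝ) : traceLift h s 0 = h s 0 := by
  rw [traceLift, neg_zero, Real.exp_zero, mul_one]

theorem dS_traceLift (k : ℕ) (h : ℝ → ℝ → ℝ) : dS k (traceLift h) = traceLift (dS k h) := by
  ext s ψ
  exact iteratedDeriv_mul_const_field _ _

theorem dPsi_traceLift (j : ℕ) (h : ℝ → ℝ → ℝ) :
    dPsi j (traceLift h) = (-1 : ℝ) ^ j • traceLift h := by
  ext s ψ
  simp only [dPsi, traceLift, iteratedDeriv_const_mul_field, iteratedDeriv_comp_neg,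
    iteratedDeriv_eq_iterate,
    Real.iter_deriv_exp, Pi.smul_apply, smul_eq_mul]
  ring

theorem wt_traceLift_sq (m : ℕ) (h : ℝ → ℝ → ℝ) (p : ℝ × ℝ) :
    wt m (traceLift h) p.1 p.2 ^ 2 = h p.1 0 ^ 2 * ((1 + p.2) ^ m * Real.exp (-p.2)) ^ 2 := by
  simp only [wt, traceLift]
  ring

theorem Smooth2.memL2_wt_traceLift (hh : Smooth2 h) (L : ℝ) (m : ℕ) :
    MemL2 L (wt m (traceLift h)) := by
  refine FiniteL2.memL2 ?_ (hh.traceLift.wt m).continuous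
  have integrable_trace : IntegrableOn (fun s => h s 0 ^ 2) (Ioc 0 L) :=
    ((hh.contDiff_slice_left 0).continuous.pow 2).integrableOn_Ioc
  rw [FiniteL2, funext (wt_traceLift_sq m h), IntegrableOn, Measure.volume_eq_prod,
    ← Measure.prod_restrict]
  exact integrable_trace.mul_prod (integrableOn_expWeight_sq m)

theorem L2sq_wt_traceLift (hL : 0 ≤ L) (m : ℕ) (h : ℝ → ℝ → ℝ) :
    L2sq L (wt m (traceLift h)) = expWeightSq m * ∫ s in 0..L, h s 0 ^ 2 := by
  simp only [L2sq, wt_traceLift_sq, intervalIntegral.integral_of_le hL]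
  rw [Measure.volume_eq_prod, setIntegral_prod_mul (fun s => h s 0 ^ 2)
    (fun ψ => ((1 + ψ) ^ m * Real.exp (-ψ)) ^ 2), mul_comm, expWeightSq]

theorem Smooth2.prandtlOp_sub (hf : Smooth2 f) (hg : Smooth2 g) (ω : ℝ) (q : ℝ → ℝ) :
    prandtlOp ω q (f - g) = prandtlOp ω q f - prandtlOp ω q g := by
  ext s ψ
  simp only [prandtlOp, hf.dS_sub hg, hf.dPsi_sub hg, Pi.sub_apply]
  ring

theorem L2sq_wt_prandtlOp_traceLift_le {ω q₁ : ℝ} (hL : 0 ≤ L) (hq : Continuous q)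
    (hbound : ∀ s ∈ Ioc 0 L, |q s| ≤ q₁) (hh : Smooth2 h) (m : ℕ) :
    L2sq L (wt m (prandtlOp ω q (traceLift h))) ≤ 2 * expWeightSq m
      * ((∫ s in 0..L, dS 1 h s 0 ^ 2) + (ω * q₁) ^ 2 * ∫ s in 0..L, h s 0 ^ 2) := by
  have split : wt m (prandtlOp ω q (traceLift h))
      = wt m (traceLift (dS 1 h)) - fun s ψ => ω * q s * wt m (traceLift h) s ψ := by
    ext s ψ
    simp only [wt_prandtlOp, dS_traceLift, dPsi_traceLift, even_two, Even.neg_pow, one_pow,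
      one_smul, Pi.sub_apply]
  have coeff_le : ∀ s ∈ Ioc 0 L, |ω * q s| ≤ |ω| * q₁ := fun s hs => by
    rw [abs_mul]
    exact mul_le_mul_of_nonneg_left (hbound s hs) (abs_nonneg ω)
  have hlift := hh.memL2_wt_traceLift L m
  have hcoeff : Continuous fun s => ω * q s := by fun_prop
  calc L2sq L (wt m (prandtlOp ω q (traceLift h)))
      ≤ 2 * (L2sq L (wt m (traceLift (dS 1 h)))
          + L2sq L (fun s ψ => ω * q s * wt m (traceLift h) s ψ)) := by
        rw [split]
        exact (hh.dS_one.memL2_wt_traceLift L m).L2sq_sub_le (hlift.mul_left hcoeff)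
    _ ≤ 2 * (L2sq L (wt m (traceLift (dS 1 h)))
          + (|ω| * q₁) ^ 2 * L2sq L (wt m (traceLift h))) := by
        gcongr
        exact hlift.L2sq_mul_left_le hcoeff coeff_le
    _ = 2 * expWeightSq m
          * ((∫ s in 0..L, dS 1 h s 0 ^ 2) + (ω * q₁) ^ 2 * ∫ s in 0..L, h s 0 ^ 2) := by
        rw [L2sq_wt_traceLift hL, L2sq_wt_traceLift hL, mul_pow, sq_abs]
        ring

/-- The function `h - h(s,0) e^{-ψ}`, which vanishes at `ψ = 0`. -/
noncomputable def homogenize (h : ℝ → ℝ → ℝ) : ℝ → ℝ → ℝ :=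
  h - traceLift h

theorem homogenize_zero_right (h : ℝ → ℝ → ℝ) (s : ℝ) : homogenize h s 0 = 0 :=
  sub_eq_zero.2 (traceLift_zero_right h s).symm

protected theorem Smooth2.homogenize (hh : Smooth2 h) : Smooth2 (homogenize h) :=
  hh.sub hh.traceLift

protected theorem PeriodicS.homogenize (hh : PeriodicS L h) : PeriodicS L (homogenize h) :=
  hh.sub hh.traceLift

theorem Smooth2.dS_homogenize (hh : Smooth2 h) (k : ℕ) :
    dS k (homogenize h) = homogenize (dS k h) := by
  rw [homogenize, hh.dS_sub hh.traceLift, dS_traceLift, homogenize]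

theorem Smooth2.dPsi_one_homogenize (hh : Smooth2 h) :
    dPsi 1 (homogenize h) = dPsi 1 h + traceLift h := by
  rw [homogenize, hh.dPsi_sub hh.traceLift, dPsi_traceLift, pow_one, neg_one_smul, sub_neg_eq_add]

theorem Smooth2.dPsi_two_homogenize (hh : Smooth2 h) :
    dPsi 2 (homogenize h) = dPsi 2 h - traceLift h := by
  rw [homogenize, hh.dPsi_sub hh.traceLift, dPsi_traceLift, neg_one_sq, one_smul]

theorem MemL2.wt_homogenize (hm : MemL2 L (wt m h)) (hh : Smooth2 h) :
    MemL2 L (wt m (homogenize h)) := by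
  rw [homogenize, wt_sub]
  exact hm.sub (hh.memL2_wt_traceLift L m)

theorem L2sq_wt_dPsi_one_homogenize_le (hL : 0 ≤ L) (hh : Smooth2 h)
    (hψ : MemL2 L (wt m (dPsi 1 h))) :
    L2sq L (wt m (dPsi 1 (homogenize h)))
      ≤ 2 * (L2sq L (wt m (dPsi 1 h)) + expWeightSq m * ∫ s in 0..L, h s 0 ^ 2) := by
  rw [hh.dPsi_one_homogenize, wt_add, ← L2sq_wt_traceLift hL]
  exact hψ.L2sq_add_le (hh.memL2_wt_traceLift L m)

theorem L2sq_wt_le_homogenize (hL : 0 ≤ L) (hh : Smooth2 h) (hm : MemL2 L (wt m h)) :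
    L2sq L (wt m h)
      ≤ 2 * (L2sq L (wt m (homogenize h)) + expWeightSq m * ∫ s in 0..L, h s 0 ^ 2) := by
  rw [← L2sq_wt_traceLift hL]
  have split : wt m h = wt m (homogenize h) + wt m (traceLift h) := by
    rw [← wt_add, homogenize, sub_add_cancel]
  nth_rw 1 [split]
  exact (hm.wt_homogenize hh).L2sq_add_le (hh.memL2_wt_traceLift L m)

theorem L2sq_wt_prandtlOp_homogenize_le {ω q₁ : ℝ} (hL : 0 ≤ L) (hq : Continuous q)
    (hbound : ∀ s ∈ Ioc 0 L, |q s| ≤ q₁) (hh : Smooth2 h) (hs : MemL2 L (wt m (dS 1 h)))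
    (hψψ : MemL2 L (wt m (dPsi 2 h))) :
    L2sq L (wt m (prandtlOp ω q (homogenize h))) ≤ 2 * (L2sq L (wt m (prandtlOp ω q h))
      + 2 * expWeightSq m
        * ((∫ s in 0..L, dS 1 h s 0 ^ 2) + (ω * q₁) ^ 2 * ∫ s in 0..L, h s 0 ^ 2)) := by
  have lift_s : MemL2 L (wt m (dS 1 (traceLift h))) :=
    dS_traceLift 1 h ▸ hh.dS_one.memL2_wt_traceLift L m
  have lift_ψψ : MemL2 L (wt m (dPsi 2 (traceLift h))) := by
    rw [dPsi_traceLift, neg_one_sq, one_smul]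
    exact hh.memL2_wt_traceLift L m
  rw [homogenize, hh.prandtlOp_sub hh.traceLift, wt_sub]
  refine ((memL2_wt_prandtlOp hq hs hψψ).L2sq_sub_le
    (memL2_wt_prandtlOp hq lift_s lift_ψψ)).trans ?_
  gcongr
  exact L2sq_wt_prandtlOp_traceLift_le hL hq hbound hh m

theorem L2sq_wt_dS_one_le {ω q₀ q₁ : ℝ} (hL : 0 ≤ L) (hq : Continuous q) (hq₀ : 0 < q₀)
    (hq₁ : 0 < q₁) (hbounds : ∀ s ∈ Ioc 0 L, q s ∈ Icc q₀ q₁) (hh : Smooth2 h)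
    (hper : PeriodicS L h) (hs : MemL2 L (wt m (dS 1 h)))
    (hψ : MemL2 L (wt (m - 1) (dPsi 1 h))) (hψψ : MemL2 L (wt m (dPsi 2 h))) :
    L2sq L (wt m (dS 1 h)) ≤ 2 * (2 * q₁ * (2 * (L2sq L (wt m (prandtlOp ω q h))
          + 2 * expWeightSq m
            * ((∫ s in 0..L, dS 1 h s 0 ^ 2) + (ω * q₁) ^ 2 * ∫ s in 0..L, h s 0 ^ 2)) / q₀
        + (2 * m * ω) ^ 2 * q₁ * (2 * (L2sq L (wt (m - 1) (dPsi 1 h))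
          + expWeightSq (m - 1) * ∫ s in 0..L, h s 0 ^ 2)))
      + expWeightSq m * ∫ s in 0..L, dS 1 h s 0 ^ 2) := by
  have abs_le (s : ℝ) (hs : s ∈ Ioc 0 L) : |q s| ≤ q₁ :=
    abs_le.2 ⟨by linarith [(hbounds s hs).1], (hbounds s hs).2⟩
  have memL2_s : MemL2 L (wt m (dS 1 (homogenize h))) := by
    rw [hh.dS_homogenize]
    exact hs.wt_homogenize hh.dS_one
  have memL2_ψ : MemL2 L (wt (m - 1) (dPsi 1 (homogenize h))) := by
    rw [hh.dPsi_one_homogenize, wt_add]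
    exact hψ.add (hh.memL2_wt_traceLift L (m - 1))
  have memL2_ψψ : MemL2 L (wt m (dPsi 2 (homogenize h))) := by
    rw [hh.dPsi_two_homogenize, wt_sub]
    exact hψψ.sub (hh.memL2_wt_traceLift L m)
  refine (L2sq_wt_le_homogenize hL hh.dS_one hs).trans ?_
  rw [← hh.dS_homogenize]
  gcongr
  refine (L2sq_wt_dS_one_le_of_trace_eq_zero (ω := ω) hL hq hq₀ hq₁ hbounds hh.homogenize
    hper.homogenize (homogenize_zero_right h) memL2_s memL2_ψ memL2_ψψ).trans ?_
  gcongr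
  · exact L2sq_wt_prandtlOp_homogenize_le hL hq abs_le hh hs hψψ
  · exact L2sq_wt_dPsi_one_homogenize_le hL hh hψ

theorem exists_pos_bounds_of_continuous (hq : Continuous q) (hpos : ∀ s, 0 < q s) (L : ℝ) :
    ∃ q₀ > 0, ∃ q₁ > 0, ∀ s ∈ Ioc 0 L, q s ∈ Icc q₀ q₁ := by
  obtain ⟨q₀, hq₀, lower⟩ := (isCompact_Icc (a := 0) (b := L)).exists_forall_le' hq.continuousOn
    fun s _ => hpos s
  obtain ⟨M, upper⟩ := (isCompact_Icc (a := 0) (b := L)).exists_bound_of_continuousOn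
    hq.continuousOn
  exact ⟨q₀, hq₀, max M 1, by positivity, fun s hs => ⟨lower s (Ioc_subset_Icc_self hs),
    (le_of_abs_le (upper s (Ioc_subset_Icc_self hs))).trans (le_max_left _ _)⟩⟩

theorem exists_L2sq_wt_dS_one_le (hL : 0 ≤ L) (hq : Continuous q) (hpos : ∀ s, 0 < q s) (ω : ℝ)
    (m : ℕ) : ∃ C ≥ 0, ∀ h, Smooth2 h → PeriodicS L h → MemL2 L (wt m (dS 1 h)) →
      MemL2 L (wt (m - 1) (dPsi 1 h)) → MemL2 L (wt m (dPsi 2 h)) →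
      L2sq L (wt m (dS 1 h)) ≤ C * (L2sq L (wt m (prandtlOp ω q h))
        + m ^ 2 * L2sq L (wt (m - 1) (dPsi 1 h))
        + ((∫ s in 0..L, h s 0 ^ 2) + ∫ s in 0..L, dS 1 h s 0 ^ 2)) := by
  obtain ⟨q₀, hq₀, q₁, hq₁, hbounds⟩ := exists_pos_bounds_of_continuous hq hpos L
  have K_nonneg := expWeightSq_nonneg m
  have K'_nonneg := expWeightSq_nonneg (m - 1)
  let cP := 8 * q₁ / q₀
  let cψ := 32 * (ω * q₁) ^ 2
  let c₀ := cP * (2 * expWeightSq m * (ω * q₁) ^ 2) + cψ * m ^ 2 * expWeightSq (m - 1)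
  let c₁ := 2 * (cP + 1) * expWeightSq m
  have cP_nonneg : 0 ≤ cP := by positivity
  have cψ_nonneg : 0 ≤ cψ := by positivity
  have c₀_nonneg : 0 ≤ c₀ := by positivity
  have c₁_nonneg : 0 ≤ c₁ := by positivity
  refine ⟨cP + cψ + c₀ + c₁, by positivity, fun h hh hper hs hψ hψψ => ?_⟩
  have P_nonneg := L2sq_nonneg L (wt m (prandtlOp ω q h))
  have X_nonneg := L2sq_nonneg L (wt (m - 1) (dPsi 1 h))
  have I₀_nonneg : 0 ≤ ∫ s in 0..L, h s 0 ^ 2 :=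
    intervalIntegral.integral_nonneg hL fun _ _ => sq_nonneg _
  have I₁_nonneg : 0 ≤ ∫ s in 0..L, dS 1 h s 0 ^ 2 :=
    intervalIntegral.integral_nonneg hL fun _ _ => sq_nonneg _
  calc L2sq L (wt m (dS 1 h))
      ≤ cP * L2sq L (wt m (prandtlOp ω q h)) + cψ * (m ^ 2 * L2sq L (wt (m - 1) (dPsi 1 h)))
          + (c₀ * (∫ s in 0..L, h s 0 ^ 2) + c₁ * ∫ s in 0..L, dS 1 h s 0 ^ 2) := by
        refine (L2sq_wt_dS_one_le (ω := ω) hL hq hq₀ hq₁ hbounds hh hper hs hψ hψψ).trans_eq ?_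
        simp only [cP, cψ, c₀, c₁]
        ring
    _ ≤ (cP + cψ + c₀ + c₁) * (L2sq L (wt m (prandtlOp ω q h))
          + m ^ 2 * L2sq L (wt (m - 1) (dPsi 1 h))
          + ((∫ s in 0..L, h s 0 ^ 2) + ∫ s in 0..L, dS 1 h s 0 ^ 2)) := by
        simp only [mul_add]
        gcongr <;> linarith

end BoundaryLift

section Commutator

variable {h : ℝ → ℝ → ℝ} {q : ℝ → ℝ}

theorem exists_L2sq_sum_mul_left_le {ι : Type*} (t : Finset ι) {a : ι → ℝ → ℝ}
    (ha : ∀ i, Continuous (a i)) (L : ℝ) :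
    ∃ C ≥ 0, ∀ φ : ι → ℝ → ℝ → ℝ, (∀ i ∈ t, MemL2 L (φ i)) →
      L2sq L (∑ i ∈ t, fun s ψ => a i s * φ i s ψ) ≤ C * ∑ i ∈ t, L2sq L (φ i) := by
  obtain ⟨M, hM⟩ := (isCompact_Icc (a := 0) (b := L)).exists_bound_of_continuousOn
    (f := fun s => ∑ i ∈ t, |a i s|) (by fun_prop)
  have coeff_le (i) (hi : i ∈ t) (s : ℝ) (hs : s ∈ Ioc 0 L) : |a i s| ≤ M :=
    (Finset.single_le_sum (f := fun i => |a i s|) (fun _ _ => abs_nonneg _) hi).trans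
      ((le_abs_self _).trans (hM s (Ioc_subset_Icc_self hs)))
  refine ⟨t.card * M ^ 2, by positivity, fun φ hφ => ?_⟩
  calc L2sq L (∑ i ∈ t, fun s ψ => a i s * φ i s ψ)
      ≤ t.card * ∑ i ∈ t, L2sq L (fun s ψ => a i s * φ i s ψ) :=
        L2sq_sum_le fun i hi => (hφ i hi).mul_left (ha i)
    _ ≤ t.card * ∑ i ∈ t, M ^ 2 * L2sq L (φ i) := by
        gcongr with i hi
        exact (hφ i hi).L2sq_mul_left_le (ha i) (coeff_le i hi)
    _ = t.card * M ^ 2 * ∑ i ∈ t, L2sq L (φ i) := by rw [← Finset.mul_sum, mul_assoc]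

theorem Smooth2.prandtlOp_dS (hh : Smooth2 h) (hq : ContDiff ℝ (⊤ : ℕ∞) q) (ω : ℝ) (k : ℕ) :
    prandtlOp ω q (dS k h) = dS k (prandtlOp ω q h) + ∑ i ∈ Finset.range k,
      fun s ψ => ω * (k.choose i * iteratedDeriv (k - i) q s) * dPsi 2 (dS i h) s ψ := by
  ext s ψ
  have diff_h := hh.dS_one.contDiffAt_slice_left k s ψ
  have diff_hψψ := (hh.dPsi 2).contDiffAt_slice_left k s ψ
  have diff_q : ContDiffAt ℝ k q s := (hq.of_le (mod_cast le_top)).contDiffAt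
  have leibniz : iteratedDeriv k (fun s => dPsi 2 h s ψ * q s) s
      = ∑ i ∈ Finset.range k, k.choose i * iteratedDeriv (k - i) q s * dPsi 2 (dS i h) s ψ
        + dPsi 2 (dS k h) s ψ * q s := by
    have slice (i : ℕ) : iteratedDeriv i (fun s => dPsi 2 h s ψ) s = dPsi 2 (dS i h) s ψ := by
      rw [← hh.dS_dPsi]; rfl
    rw [iteratedDeriv_fun_mul diff_hψψ diff_q, Finset.sum_range_succ]
    simp only [slice, Nat.choose_self, Nat.sub_self, iteratedDeriv_zero, Nat.cast_one, one_mul,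
      mul_right_comm _ _ (iteratedDeriv _ q s)]
  have expand : dS k (prandtlOp ω q h) s ψ
      = dS 1 (dS k h) s ψ - ω * iteratedDeriv k (fun s => dPsi 2 h s ψ * q s) s := by
    have regroup : (fun s => prandtlOp ω q h s ψ)
        = fun s => dS 1 h s ψ - ω * (dPsi 2 h s ψ * q s) := by
      ext s
      rw [prandtlOp]
      ring
    rw [← dS_succ, dS_succ', ← iteratedDeriv_const_mul_field, dS, regroup]
    exact iteratedDeriv_fun_sub diff_h (contDiffAt_const.mul (diff_hψψ.mul diff_q))
  rw [Pi.add_apply, Pi.add_apply, expand, leibniz, prandtlOp]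
  simp only [Finset.sum_apply, mul_assoc, ← Finset.mul_sum]
  ring

theorem exists_L2sq_wt_prandtlOp_dS_le (hq : ContDiff ℝ (⊤ : ℕ∞) q) (L ω : ℝ) (k m : ℕ) :
    ∃ C ≥ 0, ∀ h r, Smooth2 h → (∀ s, ∀ ψ > 0, prandtlOp ω q h s ψ = r s ψ) →
      MemL2 L (wt m (dS k r)) → (∀ i ∈ Finset.range k, MemL2 L (wt m (dPsi 2 (dS i h)))) →
      L2sq L (wt m (prandtlOp ω q (dS k h))) ≤ C * (L2sq L (wt m (dS k r))
        + ∑ i ∈ Finset.range k, L2sq L (wt m (dPsi 2 (dS i h)))) := by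
  have cont_coeff (i : ℕ) : Continuous fun s => ω * (k.choose i * iteratedDeriv (k - i) q s) := by
    have := hq.continuous_iteratedDeriv (k - i) (WithTop.coe_le_coe.2 le_top)
    fun_prop
  obtain ⟨C, hC, commutator_le⟩ := exists_L2sq_sum_mul_left_le (Finset.range k) cont_coeff L
  refine ⟨2 * (1 + C), by positivity, fun h r hh heq hr hψψ => ?_⟩
  have r_nonneg := L2sq_nonneg L (wt m (dS k r))
  have sum_nonneg : 0 ≤ ∑ i ∈ Finset.range k, L2sq L (wt m (dPsi 2 (dS i h))) :=
    Finset.sum_nonneg fun _ _ => L2sq_nonneg _ _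
  have on_strip (s ψ : ℝ) (hψ : ψ > 0) : wt m (prandtlOp ω q (dS k h)) s ψ
      = (wt m (dS k r) + ∑ i ∈ Finset.range k, fun s ψ =>
        ω * (k.choose i * iteratedDeriv (k - i) q s) * wt m (dPsi 2 (dS i h)) s ψ) s ψ := by
    have dS_eq : dS k (prandtlOp ω q h) s ψ = dS k r s ψ :=
      congrArg (iteratedDeriv k · s) (funext fun s => heq s ψ hψ)
    rw [hh.prandtlOp_dS hq, wt_add, wt_sum]
    simp only [wt_mul_left, Pi.add_apply]
    rw [wt, dS_eq, wt]
  calc L2sq L (wt m (prandtlOp ω q (dS k h)))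
      ≤ 2 * (L2sq L (wt m (dS k r))
          + C * ∑ i ∈ Finset.range k, L2sq L (wt m (dPsi 2 (dS i h)))) := by
        rw [L2sq_congr on_strip]
        refine (hr.L2sq_add_le (MemL2.sum fun i hi => (hψψ i hi).mul_left (cont_coeff i))).trans ?_
        gcongr
        exact commutator_le _ hψψ
    _ ≤ 2 * (1 + C) * (L2sq L (wt m (dS k r))
          + ∑ i ∈ Finset.range k, L2sq L (wt m (dPsi 2 (dS i h)))) := by
        rw [mul_assoc, mul_add (1 + C)]
        gcongr <;> nlinarith

end Commutator

section EstimateWithConstants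

variable {q : ℝ → ℝ} {L : ℝ}

theorem HnormSq_nonneg (hL : 0 ≤ L) (n : ℕ) (b : ℝ → ℝ) : 0 ≤ HnormSq L n b :=
  Finset.sum_nonneg fun _ _ => intervalIntegral.integral_nonneg hL fun _ _ => sq_nonneg _

theorem integral_sq_add_integral_sq_le_HnormSq (hL : 0 ≤ L) (k : ℕ) (b : ℝ → ℝ) :
    (∫ s in 0..L, iteratedDeriv k b s ^ 2) + ∫ s in 0..L, iteratedDeriv (k + 1) b s ^ 2
      ≤ HnormSq L (k + 1) b := by
  have terms_nonneg : 0 ≤ ∑ j ∈ Finset.range k, ∫ s in 0..L, iteratedDeriv j b s ^ 2 :=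
    Finset.sum_nonneg fun _ _ => intervalIntegral.integral_nonneg hL fun _ _ => sq_nonneg _
  rw [HnormSq, Finset.sum_range_succ, Finset.sum_range_succ]
  linarith

theorem natCast_sq_mul_ite_one_le (m : ℕ) (x : ℝ) :
    (m : ℝ) ^ 2 * (if 1 ≤ m then x else 0) = m ^ 2 * x := by
  rcases m with _ | m <;> simp

theorem exists_L2sq_wt_dS_succ_le (hL : 0 ≤ L) (hq : ContDiff ℝ (⊤ : ℕ∞) q)
    (hpos : ∀ s, 0 < q s) (ω : ℝ) (k m : ℕ) :
    ∃ C ≥ 0, ∀ h r, Smooth2 h → PeriodicS L h →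
      (∀ s, ∀ ψ > 0, prandtlOp ω q h s ψ = r s ψ) →
      MemL2 L (wt m (dS (k + 1) h)) → MemL2 L (wt m (dS k r)) →
      MemL2 L (wt (m - 1) (dPsi 1 (dS k h))) → (∀ i ≤ k, MemL2 L (wt m (dPsi 2 (dS i h)))) →
      L2sq L (wt m (dS (k + 1) h)) ≤ C * (L2sq L (wt m (dS k r))
        + HnormSq L (k + 1) (fun s => h s 0)
        + (if 1 ≤ m then L2sq L (wt (m - 1) (dPsi 1 (dS k h))) else 0)
        + ∑ i ∈ Finset.range k, L2sq L (wt m (dPsi 2 (dS i h)))) := by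
  obtain ⟨A, hA, energy⟩ := exists_L2sq_wt_dS_one_le hL hq.continuous hpos ω m
  obtain ⟨B, hB, commutator⟩ := exists_L2sq_wt_prandtlOp_dS_le hq L ω k m
  refine ⟨A * (B + m ^ 2 + 1), by positivity, fun h r hh hper heq hs hr hψ hψψ => ?_⟩
  set R := L2sq L (wt m (dS k r)) + ∑ i ∈ Finset.range k, L2sq L (wt m (dPsi 2 (dS i h)))
    with R_def
  set X := if 1 ≤ m then L2sq L (wt (m - 1) (dPsi 1 (dS k h))) else 0 with X_def
  set H := HnormSq L (k + 1) fun s => h s 0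
  have R_nonneg : 0 ≤ R := add_nonneg (L2sq_nonneg _ _)
    (Finset.sum_nonneg fun _ _ => L2sq_nonneg _ _)
  have X_nonneg : 0 ≤ X := ite_nonneg (L2sq_nonneg _ _) le_rfl
  have H_nonneg : 0 ≤ H := HnormSq_nonneg hL _ _
  calc L2sq L (wt m (dS (k + 1) h))
      ≤ A * (L2sq L (wt m (prandtlOp ω q (dS k h))) + m ^ 2 * X
          + ((∫ s in 0..L, dS k h s 0 ^ 2) + ∫ s in 0..L, dS (k + 1) h s 0 ^ 2)) := by
        rw [X_def, natCast_sq_mul_ite_one_le]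
        rw [dS_succ] at hs ⊢
        exact energy (dS k h) (hh.dS k) (hper.dS k) hs hψ (hψψ k le_rfl)
    _ ≤ A * (B * R + m ^ 2 * X + H) := by
        gcongr
        · exact commutator h r hh heq hr fun i hi => hψψ i (Finset.mem_range.1 hi).le
        · exact integral_sq_add_integral_sq_le_HnormSq hL k _
    _ ≤ A * ((B + m ^ 2 + 1) * (R + H + X)) := by
        gcongr
        nlinarith [mul_nonneg hB H_nonneg, mul_nonneg hB X_nonneg,
          mul_nonneg (sq_nonneg (m : ℝ)) (add_nonneg R_nonneg H_nonneg)]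
    _ = _ := by
        rw [R_def]
        ring

end EstimateWithConstants

theorem linear_prandtl_ds_estimate_general
    (L : ℝ) (hL : 0 ≤ L) (q_e : ℝ → ℝ) (hqe : ContDiff ℝ (⊤ : ℕ∞) q_e) (hqepos : ∀ s, 0 < q_e s)
    (ω₀ : ℝ) (k m : ℕ) :
    ∃ C > (0 : ℝ), ∀ Q F G : ℝ → ℝ → ℝ, ∀ b : ℝ → ℝ,
      Smooth2 Q → PeriodicS L Q → Smooth2 F → Smooth2 G →
      (∀ s : ℝ, ∀ ψ > (0 : ℝ),
        dS 1 Q s ψ - ω₀ * q_e s * dPsi 2 Q s ψ = F s ψ + dPsi 2 G s ψ) →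
      (∀ s : ℝ, Q s 0 = b s) →
      FiniteL2 L (wt m (dS (k + 1) Q)) →
      FiniteL2 L (wt m (dS k F)) → FiniteL2 L (wt m (dPsi 2 (dS k G))) →
      FiniteL2 L (wt (m - 1) (dPsi 1 (dS k Q))) →
      (∀ k' ≤ k, FiniteL2 L (wt m (dPsi 2 (dS k' Q)))) →
      L2sq L (wt m (dS (k + 1) Q))
        ≤ C * (L2sq L (wt m (dS k F)) + L2sq L (wt m (dPsi 2 (dS k G)))
            + HnormSq L (k + 1) b
            + (if 1 ≤ m then L2sq L (wt (m - 1) (dPsi 1 (dS k Q))) else 0)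
            + ∑ k' ∈ Finset.range k, L2sq L (wt m (dPsi 2 (dS k' Q)))) := by
  obtain ⟨C, hC, estimate⟩ := exists_L2sq_wt_dS_succ_le hL hqe hqepos ω₀ k m
  refine ⟨2 * C + 1, by positivity,
    fun Q F G b hQ hQper hF hG heq htrace hs hF₂ hG₂ hψ hψψ => ?_⟩
  obtain rfl : (fun s => Q s 0) = b := funext htrace
  have source : wt m (dS k (F + dPsi 2 G)) = wt m (dS k F) + wt m (dPsi 2 (dS k G)) := by
    rw [hF.dS_add (hG.dPsi 2), hG.dS_dPsi, wt_add]
  have memL2_F := hF₂.memL2 ((hF.dS k).wt m).continuous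
  have memL2_G := hG₂.memL2 (((hG.dS k).dPsi 2).wt m).continuous
  have source_le := memL2_F.L2sq_add_le memL2_G
  have estimate_Q := estimate Q (F + dPsi 2 G) hQ hQper heq
    (hs.memL2 ((hQ.dS (k + 1)).wt m).continuous) (source ▸ memL2_F.add memL2_G)
    (hψ.memL2 (((hQ.dS k).dPsi 1).wt (m - 1)).continuous)
    fun i hi => (hψψ i hi).memL2 (((hQ.dS i).dPsi 2).wt m).continuous
  rw [source] at estimate_Q
  have H_nonneg := HnormSq_nonneg hL (k + 1) fun s => Q s 0
  have X_nonneg : 0 ≤ if 1 ≤ m then L2sq L (wt (m - 1) (dPsi 1 (dS k Q))) else 0 :=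
    ite_nonneg (L2sq_nonneg _ _) le_rfl
  have S_nonneg : 0 ≤ ∑ k' ∈ Finset.range k, L2sq L (wt m (dPsi 2 (dS k' Q))) :=
    Finset.sum_nonneg fun _ _ => L2sq_nonneg _ _
  refine estimate_Q.trans ?_
  linarith [mul_le_mul_of_nonneg_left source_le hC, L2sq_nonneg L (wt m (dS k F)),
    L2sq_nonneg L (wt m (dPsi 2 (dS k G))),
    mul_nonneg hC (add_nonneg (add_nonneg H_nonneg X_nonneg) S_nonneg)]

/-- **The `∂_s` energy estimate for the `s`-differentiated linear Prandtl problem.** -/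
theorem linear_prandtl_ds_estimate
    (L : ℝ) (hL : 0 < L)
    (q_e : ℝ → ℝ) (hqe : ContDiff ℝ (⊤ : ℕ∞) q_e) (hqeper : Function.Periodic q_e L)
    (hqepos : ∀ s, 0 < q_e s)
    (ω₀ : ℝ) (hω₀ : 0 < ω₀) (k m : ℕ) :
    ∃ C > (0:ℝ), ∀ Q F G : ℝ → ℝ → ℝ, ∀ b : ℝ → ℝ,
      Smooth2 Q → PeriodicS L Q → Smooth2 F → PeriodicS L F →
      Smooth2 G → PeriodicS L G → ContDiff ℝ (⊤ : ℕ∞) b → Function.Periodic b L →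
      (∀ s : ℝ, ∀ ψ > (0:ℝ),
        dS 1 Q s ψ - ω₀ * q_e s * dPsi 2 Q s ψ = F s ψ + dPsi 2 G s ψ) →
      (∀ s : ℝ, Q s 0 = b s) →
      (∀ s : ℝ, Tendsto (fun ψ => Q s ψ) atTop (nhds 0)) →
      -- finiteness of all norms appearing
      FiniteL2 L (wt m (dS (k+1) Q)) →
      FiniteL2 L (wt m (dS k F)) → FiniteL2 L (wt m (dPsi 2 (dS k G))) →
      FiniteL2 L (wt (m-1) (dPsi 1 (dS k Q))) →
      (∀ k' ≤ k, FiniteL2 L (wt m (dPsi 2 (dS k' Q)))) →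
      L2sq L (wt m (dS (k+1) Q))
        ≤ C * (L2sq L (wt m (dS k F)) + L2sq L (wt m (dPsi 2 (dS k G)))
            + HnormSq L (k+1) b
            + (if 1 ≤ m then L2sq L (wt (m-1) (dPsi 1 (dS k Q))) else 0)
            + ∑ k' ∈ Finset.range k, L2sq L (wt m (dPsi 2 (dS k' Q)))) := by
  obtain ⟨C, hC, estimate⟩ :=
    linear_prandtl_ds_estimate_general L hL.le q_e hqe hqepos ω₀ k m
  exact ⟨C, hC, fun Q F G b hQ hQper hF _ hG _ _ _ heq htrace _ =>
    estimate Q F G b hQ hQper hF hG heq htrace⟩
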